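/- arXiv:1910.10884 — 2 statements merged into one kernel-verified Lean document; each statement's English description precedes it below -/
import Mathlib

section
/- Let A be a polynomial with real coefficients of degree at most 4, let C be the polynomial with C(x) = x^4·A(1/x) for all x ≠ 0, let B be one of the polynomials 0, x^4 + 1, or 2x^4 + 2, let δ ∈ {1, −1}, and for k ∈ ℝ set l = −2k − B(1) + 2δ·A(1), B_k(x) = B(x) + k(x^3 + x) + l·x^2, and D_k(x) = B_k(x)^2 − 4·A(x)·C(x). Then: (i) x^8 · D_k(1/x) = D_k(x) for all x ≠ 0 (D_k is reciprocal of formal degree 8), and (ii) (x−1)^2 divides D_k(x). -/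
/-!
The polynomials `Bk` and `A * Cpoly` are reciprocal of formal degrees 4 and 8, hence `Dk` is
reciprocal of formal degree 8. The choice of `l` gives `Bk(1) = 2 δ A(1)`, and `Cpoly(1) = A(1)`, so
`Dk(1) = 4 (δ² - 1) A(1)² = 0`. Differentiating `x ^ 8 * Dk(1/x) = Dk(x)` at `x = 1` yields
`8 Dk(1) - Dk'(1) = Dk'(1)`, so `1` is also a root of `Dk'`, i.e. a root of `Dk` of multiplicity at
least two (`sq_X_sub_one_dvd_of_reciprocal`).
-/

open Polynomial in
/-- A reciprocal polynomial (of any formal degree) vanishing at `1` vanishes there to order at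
least two. -/
theorem sq_X_sub_one_dvd_of_reciprocal (n : ℕ) (P : Polynomial ℝ)
    (h : ∀ x : ℝ, x ≠ 0 → x ^ n * P.eval x⁻¹ = P.eval x) (h1 : P.eval 1 = 0) :
    (X - 1) ^ 2 ∣ P := by
  by_cases hP : P = 0
  · simp [hP]
  have hd : P.derivative.eval 1 = 0 := by
    have e1 : HasDerivAt (fun x : ℝ => P.eval x) (P.derivative.eval 1) 1 := P.hasDerivAt 1
    have e2 : HasDerivAt (fun x : ℝ => P.eval x⁻¹) (-P.derivative.eval 1) 1 := by
      have hP' : HasDerivAt (fun x : ℝ => P.eval x) (P.derivative.eval 1) (1 : ℝ)⁻¹ := by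
        simpa using e1
      have := hP'.comp (1 : ℝ) (hasDerivAt_inv (one_ne_zero (α := ℝ)))
      simpa [Function.comp_def] using this
    have e3 := (hasDerivAt_pow n (1 : ℝ)).mul e2
    have e4 : HasDerivAt (fun x : ℝ => x ^ n * P.eval x⁻¹) (P.derivative.eval 1) 1 := by
      refine e1.congr_of_eventuallyEq ?_
      filter_upwards [isOpen_ne.mem_nhds (one_ne_zero (α := ℝ))] with x hx using h x hx
    have e5 := e3.unique e4
    simp [h1] at e5
    linarith
  have hm : 1 < P.rootMultiplicity 1 :=
    (one_lt_rootMultiplicity_iff_isRoot hP).2 ⟨h1, hd⟩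
  simpa using (le_rootMultiplicity_iff hP).1 hm

open Polynomial in
theorem stmt_10 (A : Polynomial ℝ) (hA : A.degree ≤ 4)
    (Cpoly : Polynomial ℝ)
    (hC : ∀ x : ℝ, x ≠ 0 → Cpoly.eval x = x ^ 4 * A.eval x⁻¹)
    (B : Polynomial ℝ)
    (hB : B = 0 ∨ B = X ^ 4 + 1 ∨ B = 2 * X ^ 4 + 2)
    (δ : ℝ) (hδ : δ = 1 ∨ δ = -1)
    (k l : ℝ) (hl : l = -2 * k - B.eval 1 + 2 * δ * A.eval 1)
    (Bk Dk : Polynomial ℝ)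
    (hBk : Bk = B + Polynomial.C k * (X ^ 3 + X) + Polynomial.C l * X ^ 2)
    (hDk : Dk = Bk ^ 2 - 4 * A * Cpoly) :
    (∀ x : ℝ, x ≠ 0 → x ^ 8 * Dk.eval x⁻¹ = Dk.eval x) ∧ (X - 1) ^ 2 ∣ Dk := by
  have hrec : ∀ x : ℝ, x ≠ 0 → x ^ 8 * Dk.eval x⁻¹ = Dk.eval x := by
    intro x hx
    have hBrec : x ^ 4 * B.eval x⁻¹ = B.eval x := by
      rcases hB with rfl | rfl | rfl <;> simp <;> field_simp <;> ring
    have hBkrec : x ^ 4 * Bk.eval x⁻¹ = Bk.eval x := by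
      simp only [hBk, eval_add, eval_mul, eval_C, eval_pow, eval_X, ← hBrec]
      field_simp
      ring
    have hCrec : x ^ 4 * Cpoly.eval x⁻¹ = A.eval x := by
      rw [hC x⁻¹ (inv_ne_zero hx), inv_inv]
      field_simp
    have hD : ∀ y, Dk.eval y = Bk.eval y ^ 2 - 4 * A.eval y * Cpoly.eval y := by
      intro y
      simp [hDk]
    rw [hD, hD, ← hBkrec, ← hCrec, hC x hx]
    ring
  refine ⟨hrec, sq_X_sub_one_dvd_of_reciprocal 8 Dk hrec ?_⟩
  have hC1 : Cpoly.eval 1 = A.eval 1 := by simpa using hC 1 one_ne_zero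
  have hB1 : Bk.eval 1 = 2 * δ * A.eval 1 := by
    simp [hBk, hl]
    ring
  have hδ2 : δ ^ 2 = 1 := by rcases hδ with rfl | rfl <;> norm_num
  have hD1 : Dk.eval 1 = Bk.eval 1 ^ 2 - 4 * A.eval 1 * Cpoly.eval 1 := by simp [hDk]
  rw [hD1, hB1, hC1]
  linear_combination 4 * A.eval 1 ^ 2 * hδ2
end

section
/- Let A be a polynomial with real coefficients of degree at most 6, let C be the polynomial with C(x) = x^6·A(1/x) for all x ≠ 0, let B be one of the polynomials 0, x^6 + 1, or 2x^6 + 2, let δ_1, δ_2 ∈ {1, −1}, and for k ∈ ℝ set l = (−B(1) + δ_1·A(1) + δ_2·A(−1))/2, m = −2k + δ_1·A(1) − δ_2·A(−1), B_k(x) = B(x) + k(x^5 + x) + l(x^4 + x^2) + m·x^3, and D_k(x) = B_k(x)^2 − 4·A(x)·C(x). Then: (i) x^{12} · D_k(1/x) = D_k(x) for all x ≠ 0, and (ii) (x−1)^2·(x+1)^2 divides D_k(x). -/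
/-!
Both `Bk` and `A * Cpoly` are palindromic (of weights 6 and 12), hence so is `Dk`, with weight 12.
The choice of `l` and `m` is exactly the one giving `Bk(1) = 2 δ₁ A(1)` and
`Bk(-1) = 2 δ₂ A(-1)`, and `Cpoly(±1) = A(±1)`, so `Dk` vanishes at `±1`. Finally, differentiating
`x ^ 12 * Dk(1/x) = Dk(x)` at a fixed point `a = ±1` of `x ↦ 1/x`, where `Dk(a) = 0`, gives
`-Dk'(a) = Dk'(a)`; so each of these roots is automatically at least double
(`sq_dvd_of_palindromic`).
-/

open Polynomial in
/-- A root of a palindromic polynomial of even weight at a fixed point of `x ↦ 1/x` is at least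
double. -/
lemma sq_dvd_of_palindromic (P : Polynomial ℝ) (n : ℕ)
    (h : ∀ x : ℝ, x ≠ 0 → x ^ (2 * n) * P.eval x⁻¹ = P.eval x)
    (a : ℝ) (ha : a ^ 2 = 1) (h0 : P.eval a = 0) :
    (X - C a) ^ 2 ∣ P := by
  have hane : a ≠ 0 := by
    rintro rfl
    norm_num at ha
  have hinv : a⁻¹ = a := inv_eq_of_mul_eq_one_left (by rw [← sq, ha])
  have hd0 : P.derivative.eval a = 0 := by
    have h1 : HasDerivAt (fun x : ℝ => P.eval x) (P.derivative.eval a) a := P.hasDerivAt a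
    have h1' : HasDerivAt (fun x : ℝ => P.eval x) (P.derivative.eval a) a⁻¹ := by
      rw [hinv]
      exact h1
    have h2 := (hasDerivAt_pow (2 * n) a).mul (h1'.comp a (hasDerivAt_inv hane))
    have h3 := h2.congr_of_eventuallyEq (f₁ := fun x : ℝ => P.eval x) (by
      filter_upwards [eventually_ne_nhds hane] with x hx
      simpa using (h x hx).symm)
    have h4 := h1.unique h3
    simp only [Function.comp_apply, hinv, h0, ha, pow_mul, one_pow] at h4
    linarith
  obtain ⟨Q, rfl⟩ := dvd_iff_isRoot.mpr h0
  have hQ : Q.eval a = 0 := by simpa using hd0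
  obtain ⟨R, rfl⟩ := dvd_iff_isRoot.mpr hQ
  exact ⟨R, by ring⟩

open Polynomial in
theorem stmt_11 (A : Polynomial ℝ) (hA : A.degree ≤ 6)
    (Cpoly : Polynomial ℝ)
    (hC : ∀ x : ℝ, x ≠ 0 → Cpoly.eval x = x ^ 6 * A.eval x⁻¹)
    (B : Polynomial ℝ)
    (hB : B = 0 ∨ B = X ^ 6 + 1 ∨ B = 2 * X ^ 6 + 2)
    (δ₁ δ₂ : ℝ) (hδ₁ : δ₁ = 1 ∨ δ₁ = -1) (hδ₂ : δ₂ = 1 ∨ δ₂ = -1)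
    (k l m : ℝ)
    (hl : l = (-B.eval 1 + δ₁ * A.eval 1 + δ₂ * A.eval (-1)) / 2)
    (hm : m = -2 * k + δ₁ * A.eval 1 - δ₂ * A.eval (-1))
    (Bk Dk : Polynomial ℝ)
    (hBk : Bk = B + Polynomial.C k * (X ^ 5 + X) + Polynomial.C l * (X ^ 4 + X ^ 2) +
      Polynomial.C m * X ^ 3)
    (hDk : Dk = Bk ^ 2 - 4 * A * Cpoly) :
    (∀ x : ℝ, x ≠ 0 → x ^ 12 * Dk.eval x⁻¹ = Dk.eval x) ∧
      (X - 1) ^ 2 * (X + 1) ^ 2 ∣ Dk := by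
  have hBpal : ∀ x : ℝ, x ≠ 0 → x ^ 6 * B.eval x⁻¹ = B.eval x := by
    intro x hx
    rcases hB with rfl | rfl | rfl
    · simp
    · simp
      field_simp
      ring
    · simp
      field_simp
      ring
  have hBneg : B.eval (-1) = B.eval 1 := by
    rcases hB with rfl | rfl | rfl <;> norm_num
  have hBk_eval : ∀ x : ℝ, Bk.eval x =
      B.eval x + k * (x ^ 5 + x) + l * (x ^ 4 + x ^ 2) + m * x ^ 3 := by
    intro x
    simp [hBk]
  have hD_eval : ∀ x : ℝ, Dk.eval x = Bk.eval x ^ 2 - 4 * A.eval x * Cpoly.eval x := by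
    intro x
    simp [hDk]
  have hBkpal : ∀ x : ℝ, x ≠ 0 → x ^ 6 * Bk.eval x⁻¹ = Bk.eval x := by
    intro x hx
    rw [hBk_eval, hBk_eval, ← hBpal x hx]
    field_simp
    ring
  have hpal : ∀ x : ℝ, x ≠ 0 → x ^ 12 * Dk.eval x⁻¹ = Dk.eval x := by
    intro x hx
    rw [hD_eval, hD_eval, ← hBkpal x hx, hC x hx, hC x⁻¹ (inv_ne_zero hx), inv_inv]
    field_simp
  have hδ₁2 : δ₁ ^ 2 = 1 := by rcases hδ₁ with rfl | rfl <;> norm_num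
  have hδ₂2 : δ₂ ^ 2 = 1 := by rcases hδ₂ with rfl | rfl <;> norm_num
  refine ⟨hpal, ?_⟩
  have hBk1 : Bk.eval 1 = 2 * (δ₁ * A.eval 1) := by
    rw [hBk_eval, hl, hm]
    ring
  have hBkn : Bk.eval (-1) = 2 * (δ₂ * A.eval (-1)) := by
    rw [hBk_eval, hBneg, hl, hm]
    ring
  have hD1 : Dk.eval 1 = 0 := by
    rw [hD_eval, hBk1, hC 1 one_ne_zero, inv_one]
    linear_combination 4 * A.eval 1 ^ 2 * hδ₁2
  have hDn : Dk.eval (-1) = 0 := by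
    rw [hD_eval, hBkn, hC (-1) (by norm_num), inv_neg_one]
    linear_combination 4 * A.eval (-1) ^ 2 * hδ₂2
  have d1 : (X - 1) ^ 2 ∣ Dk := by
    simpa using sq_dvd_of_palindromic Dk 6 hpal 1 (by norm_num) hD1
  have d2 : (X + 1) ^ 2 ∣ Dk := by
    simpa using sq_dvd_of_palindromic Dk 6 hpal (-1) (by norm_num) hDn
  refine IsCoprime.mul_dvd (IsCoprime.pow ?_) d1 d2
  refine ⟨-C (1 / 2), C (1 / 2), ?_⟩
  have h2 : (C (1 / 2 : ℝ) : Polynomial ℝ) * 2 = 1 := by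
    rw [show (2 : Polynomial ℝ) = C 2 from rfl, ← C_mul]
    norm_num
  linear_combination h2
end
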